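/- The τ-function satisfies τ = Ṽ_{−δ}·τ̃, τ = V̂_{−ε}·τ̂, and τ = V̄_{−λ}·τ̄, where V_α = 1 − sᵀ(1+CM)^{−1}C(χ_{α,K}(ξ))^{−1}r and Ṽ_{−δ}, V̂_{−ε}, V̄_{−λ} denote V_{−δ}, V_{−ε}, V_{−λ} evaluated at (n+1,m,h), (n,m+1,h), (n,m,h+1) respectively. In particular, whenever τ ≠ 0, W_δ·Ṽ_{−δ} = 1, where W_δ = 1 − sᵀ(χ_{δ,K′}(ξ))^{−1}C(1+MC)^{−1}r. -/

import Mathlib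

open scoped BigOperators

noncomputable section

/-- A period lattice in `ℂ` spanned by two `ℝ`-independent periods. -/
structure EllLattice where
  ω₁ : ℂ
  ω₂ : ℂ
  indep : ∀ a b : ℝ, a • ω₁ + b • ω₂ = 0 → a = 0 ∧ b = 0

namespace EllLattice

/-- Membership in the lattice `Λ = ℤω₁ + ℤω₂`. -/
def mem (L : EllLattice) (z : ℂ) : Prop := ∃ m n : ℤ, z = m • L.ω₁ + n • L.ω₂

/-- The lattice point with integer coordinates `p = (m, n)`. -/
def per (L : EllLattice) (p : ℤ × ℤ) : ℂ := p.1 • L.ω₁ + p.2 • L.ω₂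

/-- The Weierstrass sigma function associated to the lattice, defined by its
Hadamard product over the nonzero lattice points. -/
def sigma (L : EllLattice) (z : ℂ) : ℂ :=
  z * ∏' p : {p : ℤ × ℤ // p ≠ 0},
      ((1 - z / L.per p.1) *
        Complex.exp (z / L.per p.1 + z ^ 2 / (2 * (L.per p.1) ^ 2)))

/-- The Weierstrass zeta function `ζ = σ′/σ`. -/
def zeta (L : EllLattice) (z : ℂ) : ℂ := deriv L.sigma z / L.sigma z

/-- The Weierstrass `℘`-function `℘ = −ζ′`. -/
def wp (L : EllLattice) (z : ℂ) : ℂ := - deriv L.zeta z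

/-- `Φ_ξ(κ) = σ(ξ+κ)/(σ(ξ)σ(κ))`. -/
def Phi (L : EllLattice) (ξ κ : ℂ) : ℂ := L.sigma (ξ + κ) / (L.sigma ξ * L.sigma κ)

/-- The Lamé function `Ψ_ξ(κ) = Φ_ξ(κ)·e^{−ζ(ξ)κ}`. -/
def Psi (L : EllLattice) (ξ κ : ℂ) : ℂ := L.Phi ξ κ * Complex.exp (-(L.zeta ξ) * κ)

/-- `η_δ(ξ) = ζ(ξ+δ) − ζ(ξ) − ζ(δ)`. -/
def eta (L : EllLattice) (δ ξ : ℂ) : ℂ := L.zeta (ξ + δ) - L.zeta ξ - L.zeta δ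

/-- `χ_{α,β}(ξ) = ζ(α) + ζ(β) + ζ(ξ) − ζ(ξ+α+β)`. -/
def chi (L : EllLattice) (α β ξ : ℂ) : ℂ :=
  L.zeta α + L.zeta β + L.zeta ξ - L.zeta (ξ + α + β)

end EllLattice

open Matrix

/-- All the data entering the elliptic (N,N′)-soliton solutions of the lattice KP system:
a period lattice, lattice parameters `δ, ε, λ`, a base point `ξ₀`, rapidity parameters
`κ_i, κ′_j`, initial plane-wave constants `ρ⁰_i, ν⁰_j` and a constant `N′×N` matrix `C`. -/
structure KPData (N N' : ℕ) where
  L : EllLattice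
  del : ℂ
  eps : ℂ
  lam : ℂ
  xi0 : ℂ
  κ : Fin N → ℂ
  κ' : Fin N' → ℂ
  ρ0 : Fin N → ℂ
  ν0 : Fin N' → ℂ
  C : Matrix (Fin N') (Fin N) ℂ

namespace KPData

variable {N N' : ℕ}

/-- `ξ = ξ₀ + nδ + mε + hλ`. -/
def xi (D : KPData N N') (n m h : ℤ) : ℂ :=
  D.xi0 + n • D.del + m • D.eps + h • D.lam

/-- The plane-wave factor `ρ_i(n,m,h)`. -/
def ρ (D : KPData N N') (i : Fin N) (n m h : ℤ) : ℂ :=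
  (Complex.exp (-(D.L.zeta D.del) * D.κ i) * D.L.Psi D.del (-(D.κ i))) ^ n *
  (Complex.exp (-(D.L.zeta D.eps) * D.κ i) * D.L.Psi D.eps (-(D.κ i))) ^ m *
  (Complex.exp (-(D.L.zeta D.lam) * D.κ i) * D.L.Psi D.lam (-(D.κ i))) ^ h *
  Complex.exp (D.L.zeta (D.xi n m h) * D.κ i) * D.ρ0 i

/-- The plane-wave factor `ν_j(n,m,h)`. -/
def ν (D : KPData N N') (j : Fin N') (n m h : ℤ) : ℂ :=
  (Complex.exp (D.L.zeta D.del * D.κ' j) * D.L.Psi D.del (D.κ' j)) ^ (-n) *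
  (Complex.exp (D.L.zeta D.eps * D.κ' j) * D.L.Psi D.eps (D.κ' j)) ^ (-m) *
  (Complex.exp (D.L.zeta D.lam * D.κ' j) * D.L.Psi D.lam (D.κ' j)) ^ (-h) *
  Complex.exp (D.L.zeta (D.xi n m h) * D.κ' j) * D.ν0 j

/-- The dressed elliptic Cauchy matrix `M_{ij} = ρ_i Ψ_ξ(κ_i + κ′_j) ν_j`. -/
def M (D : KPData N N') (n m h : ℤ) : Matrix (Fin N) (Fin N') ℂ :=
  Matrix.of fun i j => D.ρ i n m h * D.L.Psi (D.xi n m h) (D.κ i + D.κ' j) * D.ν j n m h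

/-- The column vector `r = (ρ_i Ψ_ξ(κ_i))_i`. -/
def r (D : KPData N N') (n m h : ℤ) : Fin N → ℂ :=
  fun i => D.ρ i n m h * D.L.Psi (D.xi n m h) (D.κ i)

/-- The column vector `s = (ν_j Ψ_ξ(κ′_j))_j`. -/
def s (D : KPData N N') (n m h : ℤ) : Fin N' → ℂ :=
  fun j => D.ν j n m h * D.L.Psi (D.xi n m h) (D.κ' j)

/-- The τ-function `τ = det(1 + MC)`. -/
def τ (D : KPData N N') (n m h : ℤ) : ℂ := (1 + D.M n m h * D.C).det

/-- The diagonal matrix `χ_{α,K}(ξ) = diag(χ_{α,κ_i}(ξ))`. -/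
def DK (D : KPData N N') (α : ℂ) (n m h : ℤ) : Matrix (Fin N) (Fin N) ℂ :=
  Matrix.diagonal fun i => D.L.chi α (D.κ i) (D.xi n m h)

/-- The diagonal matrix `χ_{β,K′}(ξ) = diag(χ_{β,κ′_j}(ξ))`. -/
def DK' (D : KPData N N') (β : ℂ) (n m h : ℤ) : Matrix (Fin N') (Fin N') ℂ :=
  Matrix.diagonal fun j => D.L.chi β (D.κ' j) (D.xi n m h)

/-- `W_β = 1 − sᵀ (χ_{β,K′}(ξ))⁻¹ C (1+MC)⁻¹ r`. -/
def W (D : KPData N N') (β : ℂ) (n m h : ℤ) : ℂ :=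
  1 - D.s n m h ⬝ᵥ ((D.DK' β n m h)⁻¹ *ᵥ (D.C *ᵥ ((1 + D.M n m h * D.C)⁻¹ *ᵥ D.r n m h)))

/-- `V_α = 1 − sᵀ (1+CM)⁻¹ C (χ_{α,K}(ξ))⁻¹ r`. -/
def V (D : KPData N N') (α : ℂ) (n m h : ℤ) : ℂ :=
  1 - D.s n m h ⬝ᵥ ((1 + D.C * D.M n m h)⁻¹ *ᵥ (D.C *ᵥ ((D.DK α n m h)⁻¹ *ᵥ D.r n m h)))

/-- `w₀ = sᵀ C (1+MC)⁻¹ r`. -/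
def w0 (D : KPData N N') (n m h : ℤ) : ℂ :=
  D.s n m h ⬝ᵥ (D.C *ᵥ ((1 + D.M n m h * D.C)⁻¹ *ᵥ D.r n m h))

/-- `w = ζ(ξ) − w₀ − nζ(δ) − mζ(ε) − hζ(λ)`. -/
def w (D : KPData N N') (n m h : ℤ) : ℂ :=
  D.L.zeta (D.xi n m h) - D.w0 n m h - n • D.L.zeta D.del - m • D.L.zeta D.eps -
    h • D.L.zeta D.lam

/-- `S_{β,α} = sᵀ (χ_{β,K′}(ξ))⁻¹ C (1+MC)⁻¹ (χ_{α,K}(ξ))⁻¹ r`. -/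
def S (D : KPData N N') (β α : ℂ) (n m h : ℤ) : ℂ :=
  D.s n m h ⬝ᵥ ((D.DK' β n m h)⁻¹ *ᵥ
    (D.C *ᵥ ((1 + D.M n m h * D.C)⁻¹ *ᵥ ((D.DK α n m h)⁻¹ *ᵥ D.r n m h))))

/-- `u_α = (1+MC)⁻¹ (χ_{α,K}(ξ))⁻¹ r`. -/
def u (D : KPData N N') (α : ℂ) (n m h : ℤ) : Fin N → ℂ :=
  (1 + D.M n m h * D.C)⁻¹ *ᵥ ((D.DK α n m h)⁻¹ *ᵥ D.r n m h)

/-- `u₀ = (1+MC)⁻¹ r`. -/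
def u0 (D : KPData N N') (n m h : ℤ) : Fin N → ℂ :=
  (1 + D.M n m h * D.C)⁻¹ *ᵥ D.r n m h

/-- the adjoint (row) vector `ᵗu_β = sᵀ (χ_{β,K′}(ξ))⁻¹ (1+CM)⁻¹`. -/
def tu (D : KPData N N') (β : ℂ) (n m h : ℤ) : Fin N' → ℂ :=
  (D.s n m h ᵥ* (D.DK' β n m h)⁻¹) ᵥ* (1 + D.C * D.M n m h)⁻¹

/-- the adjoint (row) vector `ᵗu₀ = sᵀ (1+CM)⁻¹`. -/
def tu0 (D : KPData N N') (n m h : ℤ) : Fin N' → ℂ :=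
  D.s n m h ᵥ* (1 + D.C * D.M n m h)⁻¹

/-- The gauge variable `𝒱_α = Φ_ξ(α)·V_α`. -/
def calV (D : KPData N N') (α : ℂ) (n m h : ℤ) : ℂ :=
  D.L.Phi (D.xi n m h) α * D.V α n m h

/-- The gauge variable `𝒲_β = Φ_ξ(β)·W_β`. -/
def calW (D : KPData N N') (β : ℂ) (n m h : ℤ) : ℂ :=
  D.L.Phi (D.xi n m h) β * D.W β n m h

/-- The Schwarzian variable `Z_{β,α} = Φ_ξ(α+β)·(1 − χ_{α,β}(ξ)·S_{β,α})`. -/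
def Z (D : KPData N N') (β α : ℂ) (n m h : ℤ) : ℂ :=
  D.L.Phi (D.xi n m h) (α + β) * (1 - D.L.chi α β (D.xi n m h) * D.S β α n m h)

/-- Genericity of the parameters (together with finitely many auxiliary points `extra`):
no nontrivial integer combination of `ξ₀, δ, ε, λ`, the rapidity parameters and the
auxiliary points lies on the lattice.  In particular all arguments of `σ` occurring in
the soliton solutions and their shifts lie outside `Λ`. -/
def Generic {P : ℕ} (D : KPData N N') (extra : Fin P → ℂ) : Prop :=
  ∀ (c0 cn cm ch : ℤ) (a : Fin N → ℤ) (b : Fin N' → ℤ) (e : Fin P → ℤ),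
    ¬ (c0 = 0 ∧ cn = 0 ∧ cm = 0 ∧ ch = 0 ∧ a = 0 ∧ b = 0 ∧ e = 0) →
    ¬ D.L.mem (c0 • D.xi0 + cn • D.del + cm • D.eps + ch • D.lam +
      (∑ i, a i • D.κ i) + (∑ j, b j • D.κ' j) + ∑ t, e t • extra t)

end KPData

open Filter Topology

namespace EllLattice

/-- The associated Mathlib period pair. -/
def pp (L : EllLattice) : PeriodPair where
  ω₁ := L.ω₁
  ω₂ := L.ω₂
  indep := by
    rw [LinearIndependent.pair_iff]
    exact L.indep

lemma mem_iff (L : EllLattice) (z : ℂ) : L.mem z ↔ z ∈ L.pp.lattice := by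
  rw [PeriodPair.mem_lattice]
  simp only [mem, pp, zsmul_eq_mul, eq_comm]

/-- Weierstrass elementary factor. -/
def EF (l z : ℂ) : ℂ := (1 - z / l) * Complex.exp (z / l + z ^ 2 / (2 * l ^ 2))

lemma EF_zero_left (z : ℂ) : EF 0 z = 1 := by simp [EF]

lemma EF_zero_right (l : ℂ) : EF l 0 = 1 := by simp [EF]

lemma EF_neg (l z : ℂ) : EF (-l) (-z) = EF l z := by simp [EF]

lemma EF_ne_zero {l z : ℂ} (h : l ≠ 0 → z ≠ l) : EF l z ≠ 0 := by
  by_cases hl : l = 0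
  · subst hl; simp [EF]
  · have := h hl
    refine mul_ne_zero ?_ (Complex.exp_ne_zero _)
    rw [sub_ne_zero]
    intro h1
    exact this ((div_eq_one_iff_eq hl).1 h1.symm)

lemma EF_bound {l z : ℂ} {r : ℝ} (hz : ‖z‖ ≤ r) (h : 2 * r ≤ ‖l‖) (hr : 0 < r) :
    ‖EF l z - 1‖ ≤ 2 * r ^ 3 * ‖l‖ ^ (-3 : ℝ) := by
  have hl : 0 < ‖l‖ := by linarith
  set u := z / l with hu
  have hun : ‖u‖ ≤ r / ‖l‖ := by rw [hu, norm_div]; gcongr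
  have hrl : r / ‖l‖ ≤ 1 / 2 := by rw [div_le_iff₀ hl]; linarith
  have hu2 : ‖u‖ ≤ 1 / 2 := hun.trans hrl
  have e1 : EF l z = Complex.exp (Complex.log (1 + -u) - Complex.logTaylor 3 (-u)) := by
    have h0 : (1 + -u) ≠ 0 := by
      intro h0
      have : u = 1 := by linear_combination -h0
      rw [this] at hu2
      norm_num at hu2
    rw [Complex.exp_sub, Complex.exp_log h0, EF, ← hu, div_eq_mul_inv (1 + -u),
      ← Complex.exp_neg, ← sub_eq_add_neg]
    congr 2
    simp [Complex.logTaylor, Finset.sum_range_succ, hu]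
    field_simp
    ring
  have e2 := Complex.norm_log_sub_logTaylor_le 2 (z := -u) (by rw [norm_neg]; linarith)
  simp only [norm_neg] at e2
  norm_num at e2
  have e3 : ‖Complex.log (1 + -u) - Complex.logTaylor 3 (-u)‖ ≤ ‖u‖ ^ 3 := by
    refine e2.trans ?_
    have : (1 - ‖u‖)⁻¹ ≤ 2 := by
      rw [inv_le_comm₀ (by linarith) (by norm_num)]; linarith
    have h3 : 0 ≤ ‖u‖ ^ 3 := by positivity
    nlinarith
  have e4 : ‖u‖ ^ 3 ≤ 1 := pow_le_one₀ (norm_nonneg _) (by linarith)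
  rw [e1]
  refine (Complex.norm_exp_sub_one_le (e3.trans e4)).trans ?_
  have e5 : ‖u‖ ^ 3 ≤ r ^ 3 * ‖l‖ ^ (-3 : ℝ) := by
    calc ‖u‖ ^ 3 ≤ (r / ‖l‖) ^ 3 := by gcongr
      _ = r ^ 3 * ‖l‖ ^ (-3 : ℝ) := by
        rw [div_pow, div_eq_mul_inv, Real.rpow_neg hl.le]
        norm_cast
  linarith

lemma sigma_eq (L : EllLattice) (z : ℂ) :
    L.sigma z = z * ∏' l : L.pp.lattice, EF l z := by
  unfold sigma
  congr 1
  have h1 := L.pp.latticeEquivProd.symm.toEquiv.tprod_eq (fun l : L.pp.lattice => EF l z)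
  rw [← h1]
  have h2 : ∀ p : ℤ × ℤ, ((L.pp.latticeEquivProd.symm.toEquiv p : L.pp.lattice) : ℂ) = L.per p := by
    intro p
    have := L.pp.latticeEquiv_symm_apply p
    simp only [per, zsmul_eq_mul]
    exact this
  simp only [h2]
  rw [← tprod_subtype_eq_of_mulSupport_subset (f := fun p => EF (L.per p) z) (s := {p | p ≠ 0})]
  · rfl
  · intro p hp h0
    apply hp
    rw [h0]
    simp [per, EF]

lemma cofinite_lattice (L : EllLattice) (R : ℝ) :
    ∀ᶠ l : L.pp.lattice in cofinite, R ≤ ‖(l : ℂ)‖ := by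
  refine (isCompact_iff_finite.mp (isCompact_closedBall (0 : L.pp.lattice) R)).subset ?_
  intro l hl
  have hl' : ¬ R ≤ ‖(l : ℂ)‖ := hl
  simp only [Metric.mem_closedBall, dist_zero_right]
  exact (not_le.1 hl').le

lemma summable_lattice (L : EllLattice) (c : ℝ) :
    Summable (fun l : L.pp.lattice => c * ‖(l : ℂ)‖ ^ (-3 : ℝ)) :=
  (ZLattice.summable_norm_rpow L.pp.lattice (-3 : ℝ) (by simp; norm_num)).mul_left c

lemma hasProd_EF (L : EllLattice) :
    HasProdLocallyUniformlyOn (fun (l : L.pp.lattice) z => EF l z)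
      (fun z => ∏' l : L.pp.lattice, EF l z) Set.univ := by
  apply hasProdLocallyUniformlyOn_of_forall_compact isOpen_univ
  intro K _ hK
  obtain ⟨r, hr, hKr⟩ := hK.isBounded.exists_pos_norm_le
  have := Summable.hasProdUniformlyOn_one_add (f := fun (l : L.pp.lattice) z => EF l z - 1)
    hK (L.summable_lattice (2 * r ^ 3)) ?_ ?_
  · simpa using this
  · filter_upwards [L.cofinite_lattice (2 * r)] with l hl x hx
    exact EF_bound (hKr x hx) hl hr
  · intro l
    unfold EF
    fun_prop

lemma summable_EF (L : EllLattice) (z : ℂ) :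
    Summable (fun l : L.pp.lattice => ‖EF l z - 1‖) := by
  refine Summable.of_norm_bounded_eventually (L.summable_lattice (2 * (‖z‖ + 1) ^ 3)) ?_
  filter_upwards [L.cofinite_lattice (2 * (‖z‖ + 1))] with l hl
  rw [norm_norm]
  exact EF_bound (by linarith) hl (by positivity)

/-- The regular part of sigma. -/
def PF (L : EllLattice) (z : ℂ) : ℂ := ∏' l : L.pp.lattice, EF l z

lemma differentiable_EF (l : ℂ) : Differentiable ℂ (EF l) := by
  unfold EF
  fun_prop

lemma differentiable_PF (L : EllLattice) : Differentiable ℂ L.PF := by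
  rw [← differentiableOn_univ]
  exact L.hasProd_EF.differentiableOn
    (.of_forall fun s => by
      exact DifferentiableOn.fun_finsetProd (fun i _ => (differentiable_EF _).differentiableOn)) isOpen_univ

lemma PF_zero (L : EllLattice) : L.PF 0 = 1 := by simp [PF, EF_zero_right]

lemma PF_ne_zero (L : EllLattice) {z : ℂ} (h : ∀ l ∈ L.pp.lattice, l ≠ 0 → z ≠ l) :
    L.PF z ≠ 0 := by
  have := tprod_one_add_ne_zero_of_summable (f := fun l : L.pp.lattice => EF l z - 1)
    (fun l => by simpa using EF_ne_zero (h l l.2)) (L.summable_EF z)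
  simpa [PF] using this

lemma PF_neg (L : EllLattice) (z : ℂ) : L.PF (-z) = L.PF z := by
  unfold PF
  rw [← (Equiv.neg L.pp.lattice).tprod_eq]
  simp [EF_neg]

lemma sigma_eq' (L : EllLattice) : L.sigma = fun z => z * L.PF z := by
  ext z; exact L.sigma_eq z

lemma sigma_neg (L : EllLattice) (z : ℂ) : L.sigma (-z) = - L.sigma z := by
  simp [sigma_eq', PF_neg]

lemma sigma_zero (L : EllLattice) : L.sigma 0 = 0 := by simp [sigma_eq']

lemma differentiable_sigma (L : EllLattice) : Differentiable ℂ L.sigma := by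
  rw [sigma_eq']
  have := L.differentiable_PF
  fun_prop

lemma sigma_ne_zero (L : EllLattice) {z : ℂ} (h : z ∉ L.pp.lattice) : L.sigma z ≠ 0 := by
  rw [sigma_eq']
  refine mul_ne_zero ?_ (L.PF_ne_zero ?_)
  · rintro rfl; exact h (zero_mem _)
  · rintro l hl - rfl; exact h hl

lemma deriv_sigma_zero (L : EllLattice) : deriv L.sigma 0 = 1 := by
  rw [sigma_eq', deriv_fun_mul (by fun_prop) L.differentiable_PF.differentiableAt]
  simp [PF_zero]

lemma deriv_sigma_neg (L : EllLattice) (z : ℂ) : deriv L.sigma (-z) = deriv L.sigma z := by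
  have h := deriv_comp_neg L.sigma z
  simp only [sigma_neg, deriv.fun_neg] at h
  exact (neg_injective h).symm

end EllLattice

namespace EllLattice

/-- partial products -/
def FS (L : EllLattice) (s : Finset L.pp.lattice) (z : ℂ) : ℂ := z * ∏ l ∈ s, EF l z

lemma differentiable_FS (L : EllLattice) (s : Finset L.pp.lattice) : Differentiable ℂ (L.FS s) := by
  unfold FS
  have : ∀ l : L.pp.lattice, Differentiable ℂ (EF l) := fun l => differentiable_EF _
  fun_prop

lemma tendsto_FS (L : EllLattice) :
    TendstoLocallyUniformlyOn L.FS L.sigma atTop Set.univ := by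
  have h : TendstoLocallyUniformlyOn (fun (s : Finset L.pp.lattice) z => ∏ l ∈ s, EF l z)
      (fun z => ∏' l : L.pp.lattice, EF l z) atTop Set.univ := L.hasProd_EF
  rw [tendstoLocallyUniformlyOn_iff_forall_isCompact isOpen_univ] at h ⊢
  intro K hK hKc
  have h1 := h K hK hKc
  rw [sigma_eq']
  have h2 : TendstoUniformlyOn (fun (_ : Finset L.pp.lattice) (z : ℂ) => z) (fun z => z) atTop K := by
    intro u hu
    exact .of_forall fun n x hx => refl_mem_uniformity hu
  obtain ⟨r, hr, hKr⟩ := hKc.isBounded.exists_pos_norm_le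
  rw [Metric.tendstoUniformlyOn_iff] at h1 ⊢
  intro ε hε
  filter_upwards [h1 (ε / (r + 1)) (by positivity)] with s hs x hx
  have := hs x hx
  simp only [FS, PF]
  rw [dist_eq_norm] at this ⊢
  rw [← mul_sub, norm_mul]
  rw [lt_div_iff₀ (by positivity)] at this
  have h3 := hKr x hx
  have h4 := norm_nonneg ((∏' l : L.pp.lattice, EF l x) - ∏ l ∈ s, EF l x)
  nlinarith [norm_nonneg x]

lemma tendsto_FS' (L : EllLattice) :
    TendstoLocallyUniformlyOn (fun s => deriv (L.FS s)) (deriv L.sigma) atTop Set.univ :=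
  L.tendsto_FS.deriv (.of_forall fun s => (L.differentiable_FS s).differentiableOn) isOpen_univ

lemma tendsto_FS'' (L : EllLattice) :
    TendstoLocallyUniformlyOn (fun s => deriv (deriv (L.FS s))) (deriv (deriv L.sigma))
      atTop Set.univ :=
  L.tendsto_FS'.deriv
    (.of_forall fun s => ((L.differentiable_FS s).differentiableOn.deriv isOpen_univ)) isOpen_univ

lemma logDeriv_EF {l z : ℂ} (hl : l ≠ 0) (h : z ≠ l) :
    logDeriv (EF l) z = 1 / (z - l) + 1 / l + z / l ^ 2 := by
  have h1 : HasDerivAt (EF l) ((- (1 / l)) * Complex.exp (z / l + z ^ 2 / (2 * l ^ 2)) +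
      (1 - z / l) * (Complex.exp (z / l + z ^ 2 / (2 * l ^ 2)) *
        (1 / l + (2 * z) / (2 * l ^ 2)))) z := by
    unfold EF
    refine HasDerivAt.mul ?_ (HasDerivAt.cexp ?_)
    · simpa using ((hasDerivAt_id z).div_const l).const_sub 1
    · refine HasDerivAt.add ?_ ?_
      · simpa using ((hasDerivAt_id z).div_const l)
      · simpa using ((hasDerivAt_pow 2 z).div_const (2 * l ^ 2))
  rw [logDeriv_apply, h1.deriv, EF]
  have h2 : z - l ≠ 0 := sub_ne_zero.2 h
  have h3 : l - z ≠ 0 := sub_ne_zero.2 h.symm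
  have := Complex.exp_ne_zero (z / l + z ^ 2 / (2 * l ^ 2))
  have h4 : 1 - z / l ≠ 0 := by
    rw [one_sub_div hl]; exact div_ne_zero h3 hl
  generalize Complex.exp (z / l + z ^ 2 / (2 * l ^ 2)) = e at *
  have h5 : 1 - z / l = (l - z) / l := one_sub_div hl
  rw [h5]
  field_simp
  ring

/-- Term of the zeta sum. -/
def zt (l z : ℂ) : ℂ := if l = 0 then 0 else 1 / (z - l) + 1 / l + z / l ^ 2

lemma logDeriv_EF' {l z : ℂ} (h : z ≠ l) : logDeriv (EF l) z = zt l z := by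
  unfold zt
  split_ifs with hl
  · subst hl
    have : EF 0 = fun _ => 1 := by ext; simp [EF]
    rw [this]; simp
  · exact logDeriv_EF hl h

lemma hasDerivAt_zt {l z : ℂ} (h : z ≠ l) :
    HasDerivAt (zt l) (- (if l = 0 then 0 else 1 / (z - l) ^ 2 - 1 / l ^ 2)) z := by
  unfold zt
  split_ifs with hl
  · simpa using hasDerivAt_const z (0:ℂ)
  · have h1 : z - l ≠ 0 := sub_ne_zero.2 h
    have := ((((hasDerivAt_id z).sub_const l).inv h1).add_const (1 / l)).add
      ((hasDerivAt_id z).div_const (l ^ 2))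
    convert! this using 1
    · ext; simp
    · simp; ring

lemma logDeriv_FS (L : EllLattice) (s : Finset L.pp.lattice) {z : ℂ} (hz : z ∉ L.pp.lattice) :
    logDeriv (L.FS s) z = 1 / z + ∑ l ∈ s, zt l z := by
  have hz0 : z ≠ 0 := by rintro rfl; exact hz (zero_mem _)
  have hne : ∀ l : L.pp.lattice, z ≠ l := by rintro l rfl; exact hz l.2
  unfold FS
  have hd : ∀ l : L.pp.lattice, DifferentiableAt ℂ (EF l) z := fun l => differentiable_EF _ _
  rw [logDeriv_mul (f := fun z => z) (g := fun z => ∏ l ∈ s, EF l z) z hz0 ?_ (by fun_prop) (by fun_prop)]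
  · rw [logDeriv_prod]
    · congr 1
      · simp [logDeriv_apply]
      · exact Finset.sum_congr rfl fun l _ => logDeriv_EF' (hne l)
    · exact fun l _ => EF_ne_zero fun _ => hne l
    · exact fun l _ => hd l
  · exact Finset.prod_ne_zero_iff.2 fun l _ => EF_ne_zero fun _ => hne l

lemma isOpen_compl (L : EllLattice) : IsOpen ((L.pp.lattice : Set ℂ)ᶜ) :=
  L.pp.isClosed_lattice.isOpen_compl

lemma FS_second (L : EllLattice) (s : Finset L.pp.lattice) {z : ℂ} (hz : z ∉ L.pp.lattice) :
    (deriv (deriv (L.FS s)) z * L.FS s z - deriv (L.FS s) z * deriv (L.FS s) z) / L.FS s z ^ 2 =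
      - (1 / z ^ 2) + ∑ l ∈ s, - (if (l : ℂ) = 0 then 0 else 1 / (z - l) ^ 2 - 1 / (l : ℂ) ^ 2) := by
  have hz0 : z ≠ 0 := by rintro rfl; exact hz (zero_mem _)
  have hne : ∀ l : L.pp.lattice, z ≠ l := by rintro l rfl; exact hz l.2
  have hF : L.FS s z ≠ 0 := mul_ne_zero hz0
    (Finset.prod_ne_zero_iff.2 fun l _ => EF_ne_zero fun _ => hne l)
  have hdd : DifferentiableAt ℂ (deriv (L.FS s)) z :=
    ((L.differentiable_FS s).differentiableOn.deriv isOpen_univ).differentiableAt univ_mem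
  have h1 := hdd.hasDerivAt.div (L.differentiable_FS s z).hasDerivAt hF
  have h2 : HasDerivAt (fun z => 1 / z + ∑ l ∈ s, zt l z) (- (1 / z ^ 2) + ∑ l ∈ s, - (if (l : ℂ) = 0 then 0 else 1 / (z - l) ^ 2 - 1 / (l : ℂ) ^ 2)) z := by
    refine HasDerivAt.add ?_ (HasDerivAt.fun_sum fun l _ => hasDerivAt_zt (hne l))
    convert! hasDerivAt_inv hz0 using 1
    · ext; simp
    · simp
  refine h1.unique (h2.congr_of_eventuallyEq ?_)
  filter_upwards [L.isOpen_compl.mem_nhds hz] with x hx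
  exact L.logDeriv_FS s hx

lemma hasDerivAt_zeta (L : EllLattice) {z : ℂ} (hz : z ∉ L.pp.lattice) :
    HasDerivAt L.zeta (- L.pp.weierstrassP z) z := by
  have hs := L.sigma_ne_zero hz
  have hdd : DifferentiableAt ℂ (deriv L.sigma) z :=
    (L.differentiable_sigma.differentiableOn.deriv isOpen_univ).differentiableAt univ_mem
  have h1 := hdd.hasDerivAt.div (L.differentiable_sigma z).hasDerivAt hs
  have t0 := L.tendsto_FS.tendsto_at (Set.mem_univ z)
  have t1 := L.tendsto_FS'.tendsto_at (Set.mem_univ z)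
  have t2 := L.tendsto_FS''.tendsto_at (Set.mem_univ z)
  have t3 := ((t2.mul t0).sub (t1.mul t1)).div (t0.pow 2) (pow_ne_zero 2 hs)
  have t4 : Tendsto (fun s : Finset L.pp.lattice => - (1 / z ^ 2) + ∑ l ∈ s, - (if (l : ℂ) = 0 then 0 else 1 / (z - l) ^ 2 - 1 / (l : ℂ) ^ 2)) atTop (𝓝 (- (1 / z ^ 2) + - L.pp.weierstrassPExcept 0 z)) :=
    ((L.pp.hasSum_weierstrassPExcept 0 z).neg).const_add _
  have t5 := tendsto_nhds_unique (t3.congr fun s => L.FS_second s hz) t4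
  have h6 := L.pp.weierstrassPExcept_add 0 z
  simp at h6
  convert! h1 using 1
  rw [t5, ← h6]
  simp

end EllLattice

namespace EllLattice

lemma countable_lattice (L : EllLattice) : (L.pp.lattice : Set ℂ).Countable := by
  have : Countable L.pp.lattice := L.pp.latticeEquivProd.toEquiv.injective.countable
  exact Set.countable_coe_iff.1 this

lemma add_mem_iff (L : EllLattice) {z w : ℂ} (hw : w ∈ L.pp.lattice) :
    z + w ∈ L.pp.lattice ↔ z ∈ L.pp.lattice :=
  Submodule.add_mem_iff_left _ hw

lemma sigma_quasi (L : EllLattice) {w : ℂ} (hw : w ∈ L.pp.lattice) :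
    ∃ c η : ℂ, c ≠ 0 ∧ ∀ z, L.sigma (z + w) = c * Complex.exp (η * z) * L.sigma z := by
  have hpc : IsPreconnected ((L.pp.lattice : Set ℂ)ᶜ) :=
    (L.countable_lattice.isConnected_compl_of_one_lt_rank
      (by rw [Complex.rank_real_complex]; norm_num)).isPreconnected
  have hdense : Dense ((L.pp.lattice : Set ℂ)ᶜ) := L.countable_lattice.dense_compl ℝ
  obtain ⟨z0, hz0⟩ := hdense.nonempty
  -- zeta difference constant
  have hd1 : ∀ z ∈ ((L.pp.lattice : Set ℂ)ᶜ),
      HasDerivAt (fun z => L.zeta (z + w) - L.zeta z) 0 z := by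
    intro z hz
    have h1 : z + w ∉ L.pp.lattice := fun h => hz ((L.add_mem_iff hw).1 h)
    have h2 := ((L.hasDerivAt_zeta h1).comp_add_const z w).sub (L.hasDerivAt_zeta hz)
    have h3 := L.pp.weierstrassP_add_coe z ⟨w, hw⟩
    simp only at h3
    rw [h3] at h2
    simpa using! h2
  have hc1 : ∀ z ∈ ((L.pp.lattice : Set ℂ)ᶜ),
      L.zeta (z + w) - L.zeta z = L.zeta (z0 + w) - L.zeta z0 := by
    intro z hz
    exact L.isOpen_compl.is_const_of_deriv_eq_zero hpc
      (fun x hx => (hd1 x hx).differentiableAt.differentiableWithinAt)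
      (fun x hx => (hd1 x hx).deriv) hz hz0
  set η := L.zeta (z0 + w) - L.zeta z0 with hη
  have hd2 : ∀ z ∈ ((L.pp.lattice : Set ℂ)ᶜ),
      HasDerivAt (fun z => L.sigma (z + w) / L.sigma z * Complex.exp (-(η * z))) 0 z := by
    intro z hz
    have h1 : z + w ∉ L.pp.lattice := fun h => hz ((L.add_mem_iff hw).1 h)
    have s1 := L.sigma_ne_zero h1
    have s2 := L.sigma_ne_zero hz
    have e := hc1 z hz
    have g1 := (L.differentiable_sigma (z + w)).hasDerivAt.comp_add_const z w
    have g2 := (L.differentiable_sigma z).hasDerivAt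
    have g3 : HasDerivAt (fun z => Complex.exp (-(η * z))) (Complex.exp (-(η * z)) * (-η)) z := by
      refine HasDerivAt.cexp ?_
      simpa using ((hasDerivAt_id z).const_mul η).fun_neg
    have g4 := (g1.div g2 s2).mul g3
    convert! g4 using 1
    simp only [zeta] at e
    rw [← e]
    simp
    field_simp
    ring
  have hc2 : ∀ z ∈ ((L.pp.lattice : Set ℂ)ᶜ),
      L.sigma (z + w) / L.sigma z * Complex.exp (-(η * z)) =
        L.sigma (z0 + w) / L.sigma z0 * Complex.exp (-(η * z0)) := by
    intro z hz
    exact L.isOpen_compl.is_const_of_deriv_eq_zero hpc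
      (fun x hx => (hd2 x hx).differentiableAt.differentiableWithinAt)
      (fun x hx => (hd2 x hx).deriv) hz hz0
  refine ⟨L.sigma (z0 + w) / L.sigma z0 * Complex.exp (-(η * z0)), η, ?_, ?_⟩
  · have h1 : z0 + w ∉ L.pp.lattice := fun h => hz0 ((L.add_mem_iff hw).1 h)
    exact mul_ne_zero (div_ne_zero (L.sigma_ne_zero h1) (L.sigma_ne_zero hz0))
      (Complex.exp_ne_zero _)
  · have hcont := L.differentiable_sigma.continuous
    have := Continuous.ext_on hdense (f := fun z => L.sigma (z + w))
      (g := fun z => L.sigma (z0 + w) / L.sigma z0 * Complex.exp (-(η * z0)) *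
        Complex.exp (η * z) * L.sigma z) (by fun_prop) (by fun_prop) ?_
    · exact fun z => congrFun this z
    · intro z hz
      simp only
      rw [← hc2 z hz]
      have := L.sigma_ne_zero hz
      rw [Complex.exp_neg]
      have := Complex.exp_ne_zero (η * z)
      field_simp

lemma deriv_sigma_quasi (L : EllLattice) {w c η : ℂ}
    (h : ∀ z, L.sigma (z + w) = c * Complex.exp (η * z) * L.sigma z) (z : ℂ) :
    deriv L.sigma (z + w) = c * Complex.exp (η * z) * (deriv L.sigma z + η * L.sigma z) := by
  have g1 := (L.differentiable_sigma (z + w)).hasDerivAt.comp_add_const z w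
  have g3 : HasDerivAt (fun z => Complex.exp (η * z)) (Complex.exp (η * z) * η) z := by
    refine HasDerivAt.cexp ?_
    simpa using ((hasDerivAt_id z).const_mul η)
  have g2 := (g3.const_mul c).mul (L.differentiable_sigma z).hasDerivAt
  have e : (fun z => L.sigma (z + w)) = fun z => c * Complex.exp (η * z) * L.sigma z := funext h
  rw [e] at g1
  rw [g1.unique g2]
  ring

lemma deriv_sigma_ne_zero (L : EllLattice) {w : ℂ} (hw : w ∈ L.pp.lattice) :
    deriv L.sigma w ≠ 0 := by
  obtain ⟨c, η, hc, h⟩ := L.sigma_quasi hw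
  have := L.deriv_sigma_quasi h 0
  simp [deriv_sigma_zero, sigma_zero] at this
  rwa [this]

lemma sigma_mem (L : EllLattice) {w : ℂ} (hw : w ∈ L.pp.lattice) : L.sigma w = 0 := by
  obtain ⟨c, η, hc, h⟩ := L.sigma_quasi hw
  have := h 0
  simpa [sigma_zero] using this

lemma sigma_eq_zero_iff (L : EllLattice) {w : ℂ} : L.sigma w = 0 ↔ w ∈ L.pp.lattice :=
  ⟨fun h => by by_contra h1; exact L.sigma_ne_zero h1 h, L.sigma_mem⟩

/-- Liouville-type lemma. -/
lemma liouville_ratio (L : EllLattice) {F D : ℂ → ℂ} (hF : Differentiable ℂ F)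
    (hD : Differentiable ℂ D)
    (hper : ∀ w ∈ L.pp.lattice, ∃ m : ℂ → ℂ, Differentiable ℂ m ∧ (∀ z, m z ≠ 0) ∧
      (∀ z, F (z + w) = m z * F z) ∧ ∀ z, D (z + w) = m z * D z)
    (hz : ∀ z, D z = 0 → F z = 0 ∧ deriv D z ≠ 0) : ∃ k, ∀ z, F z = k * D z := by
  classical
  set Q : ℂ → ℂ := fun z => if D z = 0 then deriv F z / deriv D z else F z / D z with hQ
  have hdQ : Differentiable ℂ Q := by
    intro z
    by_cases h0 : D z = 0
    · obtain ⟨hF0, hD0⟩ := hz z h0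
      have h1 : DifferentiableAt ℂ (fun x => dslope F z x / dslope D z x) z := by
        have a1 := (Complex.differentiableOn_dslope (univ_mem (f := 𝓝 z))).2 hF.differentiableOn
        have a2 := (Complex.differentiableOn_dslope (univ_mem (f := 𝓝 z))).2 hD.differentiableOn
        exact (a1.differentiableAt univ_mem).div (a2.differentiableAt univ_mem)
          (by rwa [dslope_same])
      refine h1.congr_of_eventuallyEq ?_
      have h2 : ∀ᶠ x in 𝓝[≠] z, D x ≠ 0 := by
        simpa [h0] using (hD z).hasDerivAt.eventually_ne hD0 (c := 0)
      rw [eventually_nhdsWithin_iff] at h2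
      filter_upwards [h2] with x hx
      by_cases hxz : x = z
      · subst hxz
        simp [hQ, h0]
      · have hx' := hx hxz
        have : x - z ≠ 0 := sub_ne_zero.2 hxz
        simp only [hQ, if_neg hx', dslope_of_ne _ hxz, slope_def_field, hF0, h0, sub_zero]
        field_simp
    · have h1 : DifferentiableAt ℂ (fun x => F x / D x) z := (hF z).div (hD z) h0
      refine h1.congr_of_eventuallyEq ?_
      filter_upwards [(hD z).continuousAt.eventually_ne h0] with x hx
      simp [hQ, hx]
  have hpQ : ∀ z w, w ∈ L.pp.lattice → Q (z + w) = Q z := by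
    intro z w hw
    obtain ⟨m, hm, hm0, hmF, hmD⟩ := hper w hw
    have key : ∀ G : ℂ → ℂ, Differentiable ℂ G → (∀ z, G (z + w) = m z * G z) → G z = 0 →
        deriv G (z + w) = m z * deriv G z := by
      intro G hG h h0
      have e : (fun z => G (z + w)) = fun z => m z * G z := funext h
      rw [← deriv_comp_add_const, e, deriv_fun_mul (hm z) (hG z), h0]
      simp
    simp only [hQ, hmD, mul_eq_zero, hm0 z, false_or]
    split_ifs with h0
    · rw [key F hF hmF (hz z h0).1, key D hD hmD h0, mul_div_mul_left _ _ (hm0 z)]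
    · rw [hmF, mul_div_mul_left _ _ (hm0 z)]
  have hconst := hdQ.apply_eq_apply_of_bounded
    (IsZLattice.isCompact_range_of_periodic L.pp.lattice _ hdQ.continuous hpQ).isBounded
  refine ⟨Q 0, fun z => ?_⟩
  rw [← hconst z 0]
  by_cases h0 : D z = 0
  · rw [h0, (hz z h0).1, mul_zero]
  · simp [hQ, h0]

/-- The zeta addition identity, in polynomial form. -/
lemma zeta_identity (L : EllLattice) {b c : ℂ} (hb : b ∉ L.pp.lattice) (hc : c ∉ L.pp.lattice)
    (hbc : b - c ∉ L.pp.lattice) (a : ℂ) :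
    deriv L.sigma a * L.sigma (a + (b + c)) + (L.zeta b + L.zeta c) * (L.sigma a * L.sigma (a + (b + c)))
      - L.sigma a * deriv L.sigma (a + (b + c)) =
    L.sigma (b + c) / (L.sigma b * L.sigma c) * (L.sigma (a + b) * L.sigma (a + c)) := by
  have sb := L.sigma_ne_zero hb
  have sc := L.sigma_ne_zero hc
  have hs := L.differentiable_sigma
  have hs' : Differentiable ℂ (deriv L.sigma) := by
    rw [← differentiableOn_univ]
    exact hs.differentiableOn.deriv isOpen_univ
  set F : ℂ → ℂ := fun a => deriv L.sigma a * L.sigma (a + (b + c)) +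
    (L.zeta b + L.zeta c) * (L.sigma a * L.sigma (a + (b + c)))
      - L.sigma a * deriv L.sigma (a + (b + c)) with hF
  set D : ℂ → ℂ := fun a => L.sigma (a + b) * L.sigma (a + c) with hD
  have hquasi : ∀ w ∈ L.pp.lattice, ∃ m : ℂ → ℂ, Differentiable ℂ m ∧ (∀ z, m z ≠ 0) ∧
      (∀ z, F (z + w) = m z * F z) ∧ ∀ z, D (z + w) = m z * D z := by
    intro w hw
    obtain ⟨k, η, hk, h⟩ := L.sigma_quasi hw
    have h' := L.deriv_sigma_quasi h
    refine ⟨fun z => k * k * (Complex.exp (η * z) * Complex.exp (η * (z + (b + c)))), by fun_prop,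
      fun z => mul_ne_zero (mul_ne_zero hk hk)
        (mul_ne_zero (Complex.exp_ne_zero _) (Complex.exp_ne_zero _)), ?_, ?_⟩
    · intro z
      simp only [hF]
      rw [add_right_comm z w (b + c), h, h, h', h']
      ring
    · intro z
      simp only [hD]
      rw [add_right_comm z w b, add_right_comm z w c, h, h, ← Complex.exp_add,
        show η * z + η * (z + (b + c)) = η * (z + b) + η * (z + c) by ring, Complex.exp_add]
      ring
  have F1 : F (-b) = 0 := by
    simp only [hF]
    rw [show -b + (b + c) = c by ring, deriv_sigma_neg, sigma_neg]
    simp only [zeta]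
    field_simp
    ring
  have F2 : F (-c) = 0 := by
    simp only [hF]
    rw [show -c + (b + c) = b by ring, deriv_sigma_neg, sigma_neg]
    simp only [zeta]
    field_simp
    ring
  have hFz : ∀ x z, x + z ∈ L.pp.lattice → F (-x) = 0 → F z = 0 := by
    intro x z hx h0
    obtain ⟨m, -, -, h1, -⟩ := hquasi _ hx
    have := h1 (-x)
    rwa [h0, mul_zero, neg_add_cancel_left] at this
  obtain ⟨k, hk⟩ := L.liouville_ratio (F := F) (D := D) (by fun_prop) (by fun_prop) hquasi (by
    intro z hz
    have hdD : deriv D z = deriv L.sigma (z + b) * L.sigma (z + c) +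
        L.sigma (z + b) * deriv L.sigma (z + c) := by
      simp only [hD]
      rw [deriv_fun_mul (by fun_prop) (by fun_prop), deriv_comp_add_const, deriv_comp_add_const]
    rw [hdD]
    rcases mul_eq_zero.1 hz with h | h
    · have hm := L.sigma_eq_zero_iff.1 h
      refine ⟨hFz b z (by rwa [add_comm]) F1, ?_⟩
      rw [h, zero_mul, add_zero]
      refine mul_ne_zero (L.deriv_sigma_ne_zero hm) (L.sigma_ne_zero fun h2 => hbc ?_)
      simpa using sub_mem hm h2
    · have hm := L.sigma_eq_zero_iff.1 h
      refine ⟨hFz c z (by rwa [add_comm]) F2, ?_⟩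
      rw [h, mul_zero, zero_add]
      refine mul_ne_zero (L.sigma_ne_zero fun h2 => hbc ?_) (L.deriv_sigma_ne_zero hm)
      simpa using sub_mem h2 hm)
  have hk0 := hk 0
  simp only [hF, hD, zero_add, sigma_zero, deriv_sigma_zero, zero_mul, mul_zero, sub_zero, add_zero,
    one_mul] at hk0
  have hka := hk a
  simp only [hF, hD] at hka
  rw [hka, hk0]
  field_simp

/-- `χ` in terms of `σ`. -/
lemma chi_eq (L : EllLattice) {a b c : ℂ} (ha : a ∉ L.pp.lattice) (hb : b ∉ L.pp.lattice)
    (hc : c ∉ L.pp.lattice) (hbc : b - c ∉ L.pp.lattice) (habc : a + (b + c) ∉ L.pp.lattice) :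
    L.zeta a + L.zeta b + L.zeta c - L.zeta (a + (b + c)) =
      L.sigma (b + c) * L.sigma (a + b) * L.sigma (a + c) /
        (L.sigma a * L.sigma b * L.sigma c * L.sigma (a + (b + c))) := by
  have h := L.zeta_identity hb hc hbc a
  have sa := L.sigma_ne_zero ha
  have sb := L.sigma_ne_zero hb
  have sc := L.sigma_ne_zero hc
  have ss := L.sigma_ne_zero habc
  have e1 : deriv L.sigma a = L.zeta a * L.sigma a := by simp only [zeta]; field_simp
  have e2 : deriv L.sigma (a + (b + c)) = L.zeta (a + (b + c)) * L.sigma (a + (b + c)) := by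
    simp only [zeta]; field_simp
  rw [e1, e2] at h
  rw [eq_div_iff (by simp [sa, sb, sc, ss])]
  field_simp at h
  linear_combination h

lemma zeta_neg (L : EllLattice) (z : ℂ) : L.zeta (-z) = - L.zeta z := by
  simp [zeta, deriv_sigma_neg, sigma_neg, div_neg]

end EllLattice

namespace EllLattice

lemma chi_eq' (L : EllLattice) {a b c ab bc ca s : ℂ} (hab : a + b = ab) (hbc' : b + c = bc)
    (hca : a + c = ca) (hs : a + (b + c) = s)
    (ha : a ∉ L.pp.lattice) (hb : b ∉ L.pp.lattice) (hc : c ∉ L.pp.lattice)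
    (hbc : b - c ∉ L.pp.lattice) (habc : s ∉ L.pp.lattice) :
    L.zeta a + L.zeta b + L.zeta c - L.zeta s =
      L.sigma bc * L.sigma ab * L.sigma ca /
        (L.sigma a * L.sigma b * L.sigma c * L.sigma s) := by
  subst hab hbc' hca hs
  exact L.chi_eq ha hb hc hbc habc

/-- Generic pair: no nontrivial combination of `x, y, k, k'` lies on the lattice. -/
def Gen4 (L : EllLattice) (x y k k' : ℂ) : Prop :=
  ∀ c d p q : ℤ, ¬ (c = 0 ∧ d = 0 ∧ p = 0 ∧ q = 0) →
    (c : ℂ) * x + d * y + p * k + q * k' ∉ L.pp.lattice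

/-- Generic triple. -/
def Gen3 (L : EllLattice) (x y k : ℂ) : Prop :=
  ∀ c d p : ℤ, ¬ (c = 0 ∧ d = 0 ∧ p = 0) →
    (c : ℂ) * x + d * y + p * k ∉ L.pp.lattice

lemma Gen4.out {L : EllLattice} {x y k k' : ℂ} (h : L.Gen4 x y k k') {z : ℂ} (c d p q : ℤ)
    (hne : ¬ (c = 0 ∧ d = 0 ∧ p = 0 ∧ q = 0)) (hz : z = (c : ℂ) * x + d * y + p * k + q * k') :
    z ∉ L.pp.lattice := by
  rw [hz]; exact h c d p q hne

lemma Gen3.out {L : EllLattice} {x y k : ℂ} (h : L.Gen3 x y k) {z : ℂ} (c d p : ℤ)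
    (hne : ¬ (c = 0 ∧ d = 0 ∧ p = 0)) (hz : z = (c : ℂ) * x + d * y + p * k) :
    z ∉ L.pp.lattice := by
  rw [hz]; exact h c d p hne

lemma fay_sigma (L : EllLattice) {x y k k' : ℂ} (h : L.Gen4 x y k k') :
    L.sigma (k' + y) * L.sigma (x + y) * L.sigma k * L.sigma (x + (k + k')) -
      L.sigma (k + k') * L.sigma (x + k) * L.sigma y * L.sigma (x + y + k') =
    - (L.sigma (y - k) * L.sigma (x + y + (k + k')) * L.sigma x * L.sigma k') := by
  have hx : x ∉ L.pp.lattice := h.out 1 0 0 0 (by simp) (by push_cast; ring)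
  have hy : y ∉ L.pp.lattice := h.out 0 1 0 0 (by simp) (by push_cast; ring)
  have hk : k ∉ L.pp.lattice := h.out 0 0 1 0 (by simp) (by push_cast; ring)
  have hk' : k' ∉ L.pp.lattice := h.out 0 0 0 1 (by simp) (by push_cast; ring)
  have hnk : -k ∉ L.pp.lattice := h.out 0 0 (-1) 0 (by simp) (by push_cast; ring)
  have h1 : x + y + k' ∉ L.pp.lattice := h.out 1 1 0 1 (by simp) (by push_cast; ring)
  have h2 : x + (k + k') ∉ L.pp.lattice := h.out 1 0 1 1 (by simp) (by push_cast; ring)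
  have h3 : x + k' ∉ L.pp.lattice := h.out 1 0 0 1 (by simp) (by push_cast; ring)
  have e1 := L.chi_eq' (a := x) (b := k') (c := y) (ab := x + k') (bc := k' + y) (ca := x + y)
    (s := x + y + k') rfl rfl rfl (by ring) hx hk' hy
    (h.out 0 (-1) 0 1 (by simp) (by push_cast; ring)) h1
  have e2 := L.chi_eq' (a := x) (b := k') (c := k) (ab := x + k') (bc := k + k') (ca := x + k)
    (s := x + (k + k')) rfl (by ring) rfl (by ring) hx hk' hk
    (h.out 0 0 (-1) 1 (by simp) (by push_cast; ring)) h2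
  have e3 := L.chi_eq' (a := x + (k + k')) (b := y) (c := -k) (ab := x + y + (k + k'))
    (bc := y - k) (ca := x + k') (s := x + y + k') (by ring) (by ring) (by ring) (by ring) h2 hy hnk
    (h.out 0 1 1 0 (by simp) (by push_cast; ring)) h1
  rw [L.zeta_neg, L.sigma_neg] at e3
  have sx := L.sigma_ne_zero hx
  have sy := L.sigma_ne_zero hy
  have sk := L.sigma_ne_zero hk
  have sk' := L.sigma_ne_zero hk'
  have s1 := L.sigma_ne_zero h1
  have s2 := L.sigma_ne_zero h2
  have s3 := L.sigma_ne_zero h3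
  have e : L.sigma (k' + y) * L.sigma (x + k') * L.sigma (x + y) /
        (L.sigma x * L.sigma k' * L.sigma y * L.sigma (x + y + k')) -
      L.sigma (k + k') * L.sigma (x + k') * L.sigma (x + k) /
        (L.sigma x * L.sigma k' * L.sigma k * L.sigma (x + (k + k'))) =
      L.sigma (y - k) * L.sigma (x + y + (k + k')) * L.sigma (x + k') /
        (L.sigma (x + (k + k')) * L.sigma y * -L.sigma k * L.sigma (x + y + k')) := by
    rw [← e1, ← e2, ← e3]; ring
  generalize L.sigma (k' + y) = A1 at *
  generalize L.sigma (x + y) = A2 at *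
  generalize L.sigma (k + k') = A3 at *
  generalize L.sigma (x + k) = A4 at *
  generalize L.sigma (y - k) = A5 at *
  generalize L.sigma (x + y + (k + k')) = A6 at *
  generalize L.sigma x = B1 at *
  generalize L.sigma y = B2 at *
  generalize L.sigma k = B3 at *
  generalize L.sigma k' = B4 at *
  generalize L.sigma (x + y + k') = B5 at *
  generalize L.sigma (x + (k + k')) = B6 at *
  generalize L.sigma (x + k') = B7 at *
  have t1 : B7 * (A1 * A2 * B3 * B6 - A3 * A4 * B2 * B5) / (B1 * B4 * B2 * B5 * B3 * B6) =
      B7 * (-(A5 * A6 * B1 * B4)) / (B1 * B4 * B2 * B5 * B3 * B6) := by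
    calc _ = A1 * B7 * A2 / (B1 * B4 * B2 * B5) - A3 * B7 * A4 / (B1 * B4 * B3 * B6) := by
          field_simp
      _ = A5 * A6 * B7 / (B6 * B2 * -B3 * B5) := e
      _ = _ := by field_simp
  have hD : B1 * B4 * B2 * B5 * B3 * B6 ≠ 0 := by positivity
  rw [div_left_inj' hD] at t1
  exact mul_left_cancel₀ s3 t1

lemma fay (L : EllLattice) {x y k k' : ℂ} (h : L.Gen4 x y k k') :
    L.Phi x (k + k') * L.Phi y k' =
      L.Phi x k * L.Phi (x + y) k' + L.Phi (x + y) (k + k') * L.Phi y (-k) := by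
  have e := L.fay_sigma h
  have sx := L.sigma_ne_zero (h.out (z := x) 1 0 0 0 (by simp) (by push_cast; ring))
  have sy := L.sigma_ne_zero (h.out (z := y) 0 1 0 0 (by simp) (by push_cast; ring))
  have sk := L.sigma_ne_zero (h.out (z := k) 0 0 1 0 (by simp) (by push_cast; ring))
  have sk' := L.sigma_ne_zero (h.out (z := k') 0 0 0 1 (by simp) (by push_cast; ring))
  have s1 := L.sigma_ne_zero (h.out (z := x + y) 1 1 0 0 (by simp) (by push_cast; ring))
  have s2 := L.sigma_ne_zero (h.out (z := k + k') 0 0 1 1 (by simp) (by push_cast; ring))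
  unfold Phi
  rw [L.sigma_neg, add_comm y k', ← sub_eq_add_neg]
  field_simp
  linear_combination e

lemma chi_B (L : EllLattice) {x y k : ℂ} (h : L.Gen3 x y k) :
    L.Phi y (-k) * L.Phi (x + y) k = - L.Phi x k * L.chi (-y) k (x + y) := by
  have hx : x ∉ L.pp.lattice := h.out 1 0 0 (by simp) (by push_cast; ring)
  have hy : y ∉ L.pp.lattice := h.out 0 1 0 (by simp) (by push_cast; ring)
  have hny : -y ∉ L.pp.lattice := h.out 0 (-1) 0 (by simp) (by push_cast; ring)
  have hk : k ∉ L.pp.lattice := h.out 0 0 1 (by simp) (by push_cast; ring)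
  have h1 : x + y ∉ L.pp.lattice := h.out 1 1 0 (by simp) (by push_cast; ring)
  have h2 : x + k ∉ L.pp.lattice := h.out 1 0 1 (by simp) (by push_cast; ring)
  have e := L.chi_eq' (a := x + y) (b := -y) (c := k) (ab := x) (bc := -(y - k)) (ca := x + y + k)
    (s := x + k) (by ring) (by ring) rfl (by ring) h1 hny hk
    (h.out 0 (-1) (-1) (by simp) (by push_cast; ring)) h2
  have e' : L.chi (-y) k (x + y) = L.sigma (-(y - k)) * L.sigma x * L.sigma (x + y + k) /
        (L.sigma (x + y) * L.sigma (-y) * L.sigma k * L.sigma (x + k)) := by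
    rw [← e, chi, show x + y + -y + k = x + k by ring]; ring
  rw [e']
  have sx := L.sigma_ne_zero hx
  have sy := L.sigma_ne_zero hy
  have sk := L.sigma_ne_zero hk
  have s1 := L.sigma_ne_zero h1
  have s2 := L.sigma_ne_zero h2
  unfold Phi
  rw [L.sigma_neg, L.sigma_neg, L.sigma_neg, ← sub_eq_add_neg]
  field_simp

lemma chi_C (L : EllLattice) {x y k : ℂ} (h : L.Gen3 x y k) :
    L.Phi x k * L.Phi y k = L.Phi (x + y) k * L.chi y k x := by
  have hx : x ∉ L.pp.lattice := h.out 1 0 0 (by simp) (by push_cast; ring)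
  have hy : y ∉ L.pp.lattice := h.out 0 1 0 (by simp) (by push_cast; ring)
  have hk : k ∉ L.pp.lattice := h.out 0 0 1 (by simp) (by push_cast; ring)
  have h1 : x + y ∉ L.pp.lattice := h.out 1 1 0 (by simp) (by push_cast; ring)
  have h2 : x + y + k ∉ L.pp.lattice := h.out 1 1 1 (by simp) (by push_cast; ring)
  have e := L.chi_eq' (a := x) (b := y) (c := k) (ab := x + y) (bc := y + k) (ca := x + k)
    (s := x + y + k) rfl rfl rfl (by ring) hx hy hk
    (h.out 0 1 (-1) (by simp) (by push_cast; ring)) h2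
  have e' : L.chi y k x = L.sigma (y + k) * L.sigma (x + y) * L.sigma (x + k) /
        (L.sigma x * L.sigma y * L.sigma k * L.sigma (x + y + k)) := by
    rw [← e, chi]; ring
  rw [e']
  have sx := L.sigma_ne_zero hx
  have sy := L.sigma_ne_zero hy
  have sk := L.sigma_ne_zero hk
  have s1 := L.sigma_ne_zero h1
  have s2 := L.sigma_ne_zero h2
  unfold Phi
  field_simp

lemma exp_Psi_neg (L : EllLattice) (y k : ℂ) :
    Complex.exp (-(L.zeta y) * k) * L.Psi y (-k) = L.Phi y (-k) := by
  rw [Psi, mul_left_comm, ← Complex.exp_add]; simp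

lemma exp_Psi (L : EllLattice) (y k : ℂ) :
    Complex.exp (L.zeta y * k) * L.Psi y k = L.Phi y k := by
  rw [Psi, mul_left_comm, ← Complex.exp_add]; simp

lemma Phi_ne_zero (L : EllLattice) {y k : ℂ} (hy : y ∉ L.pp.lattice) (hk : k ∉ L.pp.lattice)
    (h : y + k ∉ L.pp.lattice) : L.Phi y k ≠ 0 :=
  div_ne_zero (L.sigma_ne_zero h) (mul_ne_zero (L.sigma_ne_zero hy) (L.sigma_ne_zero hk))

end EllLattice

section LinAlg

variable {N N' : ℕ}

lemma det_rank_one_add (A : Matrix (Fin N) (Fin N) ℂ) (hA : IsUnit A.det) (u v : Fin N → ℂ) :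
    (A + Matrix.vecMulVec u v).det = (1 + v ⬝ᵥ (A⁻¹ *ᵥ u)) * A.det := by
  have := Matrix.det_add_replicateCol_mul_replicateRow (ι := Unit) hA u v
  rw [Matrix.vecMulVec_eq Unit, this, mul_comm]
  congr 2
  rw [Matrix.dotProduct_mulVec]
  simp [Matrix.replicateRow_mul_replicateCol_apply, Matrix.mul_apply, dotProduct, Matrix.vecMul]

lemma C_mul_inv (M : Matrix (Fin N) (Fin N') ℂ) (C : Matrix (Fin N') (Fin N) ℂ)
    (h : IsUnit (1 + M * C).det) :
    C * (1 + M * C)⁻¹ = (1 + C * M)⁻¹ * C := by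
  have h' : IsUnit (1 + C * M).det := by
    rwa [Matrix.det_one_add_mul_comm]
  have e : (1 + C * M) * C = C * (1 + M * C) := by
    rw [Matrix.add_mul, Matrix.mul_add, Matrix.one_mul, Matrix.mul_one, Matrix.mul_assoc]
  calc C * (1 + M * C)⁻¹ = (1 + C * M)⁻¹ * ((1 + C * M) * C) * (1 + M * C)⁻¹ := by
        rw [Matrix.nonsing_inv_mul_cancel_left _ _ h']
    _ = (1 + C * M)⁻¹ * C := by
        rw [e, ← Matrix.mul_assoc, Matrix.mul_nonsing_inv_cancel_right _ _ h]

lemma lin_D (M M' : Matrix (Fin N) (Fin N') ℂ) (C : Matrix (Fin N') (Fin N) ℂ)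
    (r : Fin N → ℂ) (s : Fin N' → ℂ) (hM : M' = M - Matrix.vecMulVec r s)
    (h : IsUnit (1 + M' * C).det) :
    (1 + M * C).det = (1 + s ⬝ᵥ ((1 + C * M')⁻¹ *ᵥ (C *ᵥ r))) * (1 + M' * C).det := by
  have e : 1 + M * C = (1 + M' * C) + Matrix.vecMulVec r (s ᵥ* C) := by
    rw [hM, Matrix.sub_mul, Matrix.vecMulVec_mul]; abel
  rw [e, det_rank_one_add _ h, ← Matrix.dotProduct_mulVec, Matrix.mulVec_mulVec,
    Matrix.mulVec_mulVec, C_mul_inv _ _ h]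

lemma lin_E (M M' : Matrix (Fin N) (Fin N') ℂ) (C : Matrix (Fin N') (Fin N) ℂ)
    (r : Fin N → ℂ) (s : Fin N' → ℂ) (hM : M' = M - Matrix.vecMulVec r s)
    (h : IsUnit (1 + M * C).det) :
    (1 + M' * C).det = (1 - s ⬝ᵥ (C *ᵥ ((1 + M * C)⁻¹ *ᵥ r))) * (1 + M * C).det := by
  have e : 1 + M' * C = (1 + M * C) + Matrix.vecMulVec (-r) (s ᵥ* C) := by
    rw [hM, Matrix.sub_mul, Matrix.vecMulVec_mul, Matrix.neg_vecMulVec]; abel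
  rw [e, det_rank_one_add _ h, ← Matrix.dotProduct_mulVec, Matrix.mulVec_neg,
    Matrix.mulVec_neg, dotProduct_neg, ← sub_eq_add_neg]

lemma diag_inv_mulVec (d x : Fin N → ℂ) (hd : ∀ i, d i ≠ 0) (i : Fin N) :
    ((Matrix.diagonal d)⁻¹ *ᵥ x) i = x i / d i := by
  have : (Matrix.diagonal d)⁻¹ = Matrix.diagonal (fun i => (d i)⁻¹) := by
    apply Matrix.inv_eq_right_inv
    rw [Matrix.diagonal_mul_diagonal, ← Matrix.diagonal_one]
    congr 1; funext i; exact mul_inv_cancel₀ (hd i)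
  rw [this, Matrix.mulVec_diagonal]
  rw [div_eq_inv_mul]

end LinAlg

namespace KPData

variable {N N' : ℕ}

/-- Plane-wave factor without the `ζ(ξ)` exponential. -/
def RR (D : KPData N N') (i : Fin N) (n m h : ℤ) : ℂ :=
  D.L.Phi D.del (-(D.κ i)) ^ n * D.L.Phi D.eps (-(D.κ i)) ^ m *
    D.L.Phi D.lam (-(D.κ i)) ^ h * D.ρ0 i

/-- Plane-wave factor without the `ζ(ξ)` exponential. -/
def SS (D : KPData N N') (j : Fin N') (n m h : ℤ) : ℂ :=
  D.L.Phi D.del (D.κ' j) ^ (-n) * D.L.Phi D.eps (D.κ' j) ^ (-m) *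
    D.L.Phi D.lam (D.κ' j) ^ (-h) * D.ν0 j

lemma rho_eq (D : KPData N N') (i : Fin N) (n m h : ℤ) :
    D.ρ i n m h = D.RR i n m h * Complex.exp (D.L.zeta (D.xi n m h) * D.κ i) := by
  rw [ρ, D.L.exp_Psi_neg, D.L.exp_Psi_neg, D.L.exp_Psi_neg, RR]; ring

lemma nu_eq (D : KPData N N') (j : Fin N') (n m h : ℤ) :
    D.ν j n m h = D.SS j n m h * Complex.exp (D.L.zeta (D.xi n m h) * D.κ' j) := by
  rw [ν, D.L.exp_Psi, D.L.exp_Psi, D.L.exp_Psi, SS]; ring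

lemma r_eq (D : KPData N N') (i : Fin N) (n m h : ℤ) :
    D.r n m h i = D.RR i n m h * D.L.Phi (D.xi n m h) (D.κ i) := by
  rw [r, rho_eq, mul_assoc, D.L.exp_Psi]

lemma s_eq (D : KPData N N') (j : Fin N') (n m h : ℤ) :
    D.s n m h j = D.SS j n m h * D.L.Phi (D.xi n m h) (D.κ' j) := by
  rw [s, nu_eq, mul_assoc, D.L.exp_Psi]

lemma M_eq (D : KPData N N') (i : Fin N) (j : Fin N') (n m h : ℤ) :
    D.M n m h i j =
      D.RR i n m h * D.L.Phi (D.xi n m h) (D.κ i + D.κ' j) * D.SS j n m h := by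
  rw [M, Matrix.of_apply, rho_eq, nu_eq, ← D.L.exp_Psi, mul_add, Complex.exp_add]; ring

/-- The direction-independent core. -/
lemma core (D : KPData N N') {y : ℂ} {n m h n' m' h' : ℤ}
    (hxi : D.xi n' m' h' = D.xi n m h + y)
    (hi : ∀ i, D.L.Gen3 (D.xi n m h) y (D.κ i))
    (hj : ∀ j, D.L.Gen3 (D.xi n m h) y (D.κ' j))
    (hij : ∀ i j, D.L.Gen4 (D.xi n m h) y (D.κ i) (D.κ' j))
    (hR : ∀ i, D.RR i n' m' h' = D.RR i n m h * D.L.Phi y (-(D.κ i)))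
    (hS : ∀ j, D.SS j n' m' h' = D.SS j n m h / D.L.Phi y (D.κ' j))
    (hInv : ∀ n m h : ℤ, IsUnit ((1 + D.M n m h * D.C).det))
    (hχ : ∀ i, D.L.chi (-y) (D.κ i) (D.xi n' m' h') ≠ 0) :
    D.τ n m h = D.V (-y) n' m' h' * D.τ n' m' h' ∧
    ((∀ j, D.L.chi y (D.κ' j) (D.xi n m h) ≠ 0) →
      D.W y n m h * D.V (-y) n' m' h' = 1) := by
  have hP : ∀ j, D.L.Phi y (D.κ' j) ≠ 0 := fun j =>
    D.L.Phi_ne_zero ((hj j).out 0 1 0 (by simp) (by push_cast; ring))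
      ((hj j).out 0 0 1 (by simp) (by push_cast; ring))
      ((hj j).out 0 1 1 (by simp) (by push_cast; ring))
  have hM : D.M n' m' h' = D.M n m h - Matrix.vecMulVec (D.r n m h) (D.s n' m' h') := by
    ext i j
    rw [Matrix.sub_apply, Matrix.vecMulVec_apply, M_eq, M_eq, r_eq, s_eq, hR, hS, hxi]
    have := D.L.fay (hij i j)
    have h1 := hP j
    field_simp
    linear_combination (-1 : ℂ) * D.RR i n m h * D.SS j n m h * this
  have hB : (D.DK (-y) n' m' h')⁻¹ *ᵥ D.r n' m' h' = - D.r n m h := by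
    funext i
    rw [DK, diag_inv_mulVec _ _ hχ, Pi.neg_apply, div_eq_iff (hχ i), r_eq, r_eq, hR, hxi]
    have := D.L.chi_B (hi i)
    linear_combination D.RR i n m h * this
  have hV : D.V (-y) n' m' h' =
      1 + D.s n' m' h' ⬝ᵥ ((1 + D.C * D.M n' m' h')⁻¹ *ᵥ (D.C *ᵥ D.r n m h)) := by
    rw [V, hB, Matrix.mulVec_neg, Matrix.mulVec_neg, dotProduct_neg, sub_neg_eq_add]
  have h1 : D.τ n m h = D.V (-y) n' m' h' * D.τ n' m' h' := by
    rw [hV]; exact lin_D _ _ _ _ _ hM (hInv _ _ _)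
  refine ⟨h1, fun hχ' => ?_⟩
  have hW : D.W y n m h =
      1 - D.s n' m' h' ⬝ᵥ (D.C *ᵥ ((1 + D.M n m h * D.C)⁻¹ *ᵥ D.r n m h)) := by
    rw [W]
    congr 1
    refine Finset.sum_congr rfl fun j _ => ?_
    rw [DK', diag_inv_mulVec _ _ hχ', s_eq, s_eq, hS, hxi]
    have := D.L.chi_C (hj j)
    have h2 := hP j
    have h3 := hχ' j
    field_simp
    linear_combination D.SS j n m h *
      (D.C *ᵥ ((1 + D.M n m h * D.C)⁻¹ *ᵥ D.r n m h)) j * this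
  have h2 : D.τ n' m' h' = D.W y n m h * D.τ n m h := by
    rw [hW]; exact lin_E _ _ _ _ _ hM (hInv _ _ _)
  have h3 : D.τ n m h ≠ 0 := (hInv n m h).ne_zero
  rw [h2] at h1
  apply mul_right_cancel₀ h3
  rw [one_mul]
  linear_combination -h1

lemma gen_all (D : KPData N N') (hgen : D.Generic ![]) (n m h c a1 a2 a3 : ℤ)
    (a : Fin N → ℤ) (b : Fin N' → ℤ)
    (hne : ¬ (c = 0 ∧ a1 = 0 ∧ a2 = 0 ∧ a3 = 0 ∧ a = 0 ∧ b = 0)) {z : ℂ}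
    (hz : z = c * D.xi n m h + a1 * D.del + a2 * D.eps + a3 * D.lam +
      (∑ i, a i • D.κ i) + (∑ j, b j • D.κ' j)) :
    z ∉ D.L.pp.lattice := by
  rw [← D.L.mem_iff, hz]
  have := hgen c (c * n + a1) (c * m + a2) (c * h + a3) a b 0 (by
    rintro ⟨h0, h1, h2, h3, h4, h5, -⟩
    subst h0
    simp only [zero_mul, zero_add] at h1 h2 h3
    exact hne ⟨rfl, h1, h2, h3, h4, h5⟩)
  convert this using 1
  simp only [xi, zsmul_eq_mul, Finset.univ_eq_empty, Finset.sum_empty]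
  push_cast
  ring

lemma gen3 (D : KPData N N') (hgen : D.Generic ![]) (n m h d1 d2 d3 : ℤ)
    (hd : ¬ (d1 = 0 ∧ d2 = 0 ∧ d3 = 0)) {y : ℂ}
    (hy : y = d1 * D.del + d2 * D.eps + d3 * D.lam) (i : Fin N) :
    D.L.Gen3 (D.xi n m h) y (D.κ i) := by
  intro c d p hne
  refine D.gen_all hgen n m h c (d * d1) (d * d2) (d * d3) (Pi.single i p) 0 ?_ ?_
  · rintro ⟨h0, h1, h2, h3, h4, -⟩
    rw [Pi.single_eq_zero_iff] at h4
    simp only [mul_eq_zero] at h1 h2 h3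
    tauto
  · simp [Pi.single_apply, hy]; ring

lemma gen3' (D : KPData N N') (hgen : D.Generic ![]) (n m h d1 d2 d3 : ℤ)
    (hd : ¬ (d1 = 0 ∧ d2 = 0 ∧ d3 = 0)) {y : ℂ}
    (hy : y = d1 * D.del + d2 * D.eps + d3 * D.lam) (j : Fin N') :
    D.L.Gen3 (D.xi n m h) y (D.κ' j) := by
  intro c d p hne
  refine D.gen_all hgen n m h c (d * d1) (d * d2) (d * d3) 0 (Pi.single j p) ?_ ?_
  · rintro ⟨h0, h1, h2, h3, -, h4⟩
    rw [Pi.single_eq_zero_iff] at h4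
    simp only [mul_eq_zero] at h1 h2 h3
    tauto
  · simp [Pi.single_apply, hy]; ring

lemma gen4 (D : KPData N N') (hgen : D.Generic ![]) (n m h d1 d2 d3 : ℤ)
    (hd : ¬ (d1 = 0 ∧ d2 = 0 ∧ d3 = 0)) {y : ℂ}
    (hy : y = d1 * D.del + d2 * D.eps + d3 * D.lam) (i : Fin N) (j : Fin N') :
    D.L.Gen4 (D.xi n m h) y (D.κ i) (D.κ' j) := by
  intro c d p q hne
  refine D.gen_all hgen n m h c (d * d1) (d * d2) (d * d3) (Pi.single i p) (Pi.single j q) ?_ ?_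
  · rintro ⟨h0, h1, h2, h3, h4, h5⟩
    rw [Pi.single_eq_zero_iff] at h4 h5
    simp only [mul_eq_zero] at h1 h2 h3
    tauto
  · simp [Pi.single_apply, hy]; ring

lemma Phi_neg_ne {L : EllLattice} {x y k : ℂ} (h : L.Gen3 x y k) : L.Phi y (-k) ≠ 0 :=
  L.Phi_ne_zero (h.out 0 1 0 (by simp) (by push_cast; ring))
    (h.out 0 0 (-1) (by simp) (by push_cast; ring))
    (h.out 0 1 (-1) (by simp) (by push_cast; ring))

lemma Phi_ne {L : EllLattice} {x y k : ℂ} (h : L.Gen3 x y k) : L.Phi y k ≠ 0 :=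
  L.Phi_ne_zero (h.out 0 1 0 (by simp) (by push_cast; ring))
    (h.out 0 0 1 (by simp) (by push_cast; ring))
    (h.out 0 1 1 (by simp) (by push_cast; ring))

lemma zpow_neg_add_one {x : ℂ} (hx : x ≠ 0) (n : ℤ) : x ^ (-(n + 1)) = x ^ (-n) / x := by
  rw [neg_add, zpow_add₀ hx, _root_.zpow_neg_one, div_eq_mul_inv]

end KPData

/-- The τ-function obeys `τ = Ṽ_{−δ} τ̃`, `τ = V̂_{−ε} τ̂`, `τ = V̄_{−λ} τ̄`;
in particular, whenever `τ ≠ 0`, `W_δ·Ṽ_{−δ} = 1`. -/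
theorem tau_reverse_shift_relations {N N' : ℕ} (D : KPData N N')
    (hρ0 : ∀ i, D.ρ0 i ≠ 0) (hν0 : ∀ j, D.ν0 j ≠ 0)
    (hgen : D.Generic ![])
    (hInv : ∀ n m h : ℤ, IsUnit ((1 + D.M n m h * D.C).det))
    (hχδ : ∀ (n m h : ℤ) (i : Fin N), D.L.chi (-D.del) (D.κ i) (D.xi n m h) ≠ 0)
    (hχε : ∀ (n m h : ℤ) (i : Fin N), D.L.chi (-D.eps) (D.κ i) (D.xi n m h) ≠ 0)
    (hχl : ∀ (n m h : ℤ) (i : Fin N), D.L.chi (-D.lam) (D.κ i) (D.xi n m h) ≠ 0)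
    (hχδ' : ∀ (n m h : ℤ) (j : Fin N'), D.L.chi D.del (D.κ' j) (D.xi n m h) ≠ 0) :
    ∀ n m h : ℤ,
      D.τ n m h = D.V (-D.del) (n + 1) m h * D.τ (n + 1) m h ∧
      D.τ n m h = D.V (-D.eps) n (m + 1) h * D.τ n (m + 1) h ∧
      D.τ n m h = D.V (-D.lam) n m (h + 1) * D.τ n m (h + 1) ∧
      (D.τ n m h ≠ 0 → D.W D.del n m h * D.V (-D.del) (n + 1) m h = 1) := by
  intro n m h
  have hd1 : D.del = ((1 : ℤ) : ℂ) * D.del + ((0 : ℤ) : ℂ) * D.eps + ((0 : ℤ) : ℂ) * D.lam := by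
    simp
  have hd2 : D.eps = ((0 : ℤ) : ℂ) * D.del + ((1 : ℤ) : ℂ) * D.eps + ((0 : ℤ) : ℂ) * D.lam := by
    simp
  have hd3 : D.lam = ((0 : ℤ) : ℂ) * D.del + ((0 : ℤ) : ℂ) * D.eps + ((1 : ℤ) : ℂ) * D.lam := by
    simp
  have a1 := D.gen3 hgen n m h 1 0 0 (by simp) hd1
  have a2 := D.gen3 hgen n m h 0 1 0 (by simp) hd2
  have a3 := D.gen3 hgen n m h 0 0 1 (by simp) hd3
  have b1 := D.gen3' hgen n m h 1 0 0 (by simp) hd1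
  have b2 := D.gen3' hgen n m h 0 1 0 (by simp) hd2
  have b3 := D.gen3' hgen n m h 0 0 1 (by simp) hd3
  have c1 := D.core (y := D.del) (n := n) (m := m) (h := h) (n' := n + 1) (m' := m) (h' := h)
    (by simp only [KPData.xi, zsmul_eq_mul]; push_cast; ring) a1 b1
    (D.gen4 hgen n m h 1 0 0 (by simp) hd1)
    (fun i => by
      simp only [KPData.RR]; rw [zpow_add_one₀ (KPData.Phi_neg_ne (a1 i))]; ring)
    (fun j => by
      simp only [KPData.SS]; rw [KPData.zpow_neg_add_one (KPData.Phi_ne (b1 j))]; ring)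
    hInv (hχδ _ _ _)
  have c2 := D.core (y := D.eps) (n := n) (m := m) (h := h) (n' := n) (m' := m + 1) (h' := h)
    (by simp only [KPData.xi, zsmul_eq_mul]; push_cast; ring) a2 b2
    (D.gen4 hgen n m h 0 1 0 (by simp) hd2)
    (fun i => by
      simp only [KPData.RR]; rw [zpow_add_one₀ (KPData.Phi_neg_ne (a2 i))]; ring)
    (fun j => by
      simp only [KPData.SS]; rw [KPData.zpow_neg_add_one (KPData.Phi_ne (b2 j))]; ring)
    hInv (hχε _ _ _)
  have c3 := D.core (y := D.lam) (n := n) (m := m) (h := h) (n' := n) (m' := m) (h' := h + 1)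
    (by simp only [KPData.xi, zsmul_eq_mul]; push_cast; ring) a3 b3
    (D.gen4 hgen n m h 0 0 1 (by simp) hd3)
    (fun i => by
      simp only [KPData.RR]; rw [zpow_add_one₀ (KPData.Phi_neg_ne (a3 i))]; ring)
    (fun j => by
      simp only [KPData.SS]; rw [KPData.zpow_neg_add_one (KPData.Phi_ne (b3 j))]; ring)
    hInv (hχl _ _ _)
  exact ⟨c1.1, c2.1, c3.1, fun _ => c1.2 (hχδ' _ _ _)⟩
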